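/- Let a, b, c, λ, Δt be real numbers with λ > 0 and Δt > 0; set A = a + λc and l = 2a + b² + λc(2 + c), and assume l < 0. On a probability space, for each n ∈ ℕ let Y_n and ΔW_n be real random variables and ΔN_n an ℕ-valued random variable such that: ΔW_n has law gaussianReal 0 Δt; ΔN_n has the Poisson distribution with parameter λΔt; the three random variables Y_n, ΔW_n, ΔN_n are mutually independent; E[Y_n²] < ∞; and almost surely Y_{n+1} = Y_n + a·Y_n·Δt + λc·Y_n·Δt + b·Y_n·ΔW_n + c·Y_n·(ΔN_n − λΔt) (the semi-tamed Euler scheme applied to the linear test equation, whose taming term vanishes for a linear drift). Then E[Y_{n+1}²] = (1 + A²Δt² + lΔt)·E[Y_n²] for every n, hence E[Y_n²] = (1 + A²Δt² + lΔt)ⁿ·E[Y_0²]; moreover 1 + A²Δt² + lΔt < 1 if and only if A²Δt < −l, i.e. the semi-tamed Euler scheme is mean-square stable if and only if A²Δt < −l. -/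

import Mathlib

/-!
Almost surely `Y (n + 1) = Y n * R n`, where `R n = 1 + A Δt + b ΔW + c (ΔN - λ Δt)` depends only on
the increments and so is independent of `Y n`; hence `E[Y (n + 1)²] = E[Y n²] * E[R n²]`. Both
`ΔW` and `ΔN - λ Δt` are centred, they are uncorrelated, and their variances are `Δt` and `λ Δt`, so
`E[R n²] = (1 + A Δt)² + b² Δt + c² λ Δt = 1 + A² Δt² + l Δt`. Nothing else about the Gaussian and
Poisson laws matters.

Measurability of `ΔN` has to be extracted from the outer measures of its level sets: these add up to
the total mass, so the measurable hulls of the level sets cannot overlap in a set of positive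
measure.
-/

open MeasureTheory ProbabilityTheory
open scoped NNReal Nat

section DiscreteLaw

variable {Ω : Type*} [MeasurableSpace Ω] {P : Measure Ω}

lemma nullMeasurableSet_of_measure_add_measure_compl_le [IsFiniteMeasure P] {s : Set Ω}
    (h : P s + P sᶜ ≤ P Set.univ) : NullMeasurableSet s P := by
  have hB : MeasurableSet (toMeasurable P sᶜ) := measurableSet_toMeasurable P sᶜ
  have hsub : (toMeasurable P sᶜ)ᶜ ⊆ s := Set.compl_subset_comm.1 (subset_toMeasurable P sᶜ)
  have hle : P s ≤ P (toMeasurable P sᶜ)ᶜ := by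
    rw [measure_compl hB (measure_ne_top P _), measure_toMeasurable]
    exact ENNReal.le_sub_of_add_le_right (measure_ne_top P _) h
  exact hB.compl.nullMeasurableSet.congr <|
    ae_eq_of_subset_of_measure_ge hsub hle hB.compl.nullMeasurableSet (measure_ne_top P s)

variable {α : Type*} [MeasurableSpace α] [Countable α] [MeasurableSingletonClass α]
  {ν : Measure α} {X : Ω → α}

lemma measure_preimage_le_of_forall_singleton (h : ∀ x, P (X ⁻¹' {x}) ≤ ν {x}) (s : Set α) :
    P (X ⁻¹' s) ≤ ν s :=
  calc P (X ⁻¹' s) = P (⋃ x ∈ s, X ⁻¹' {x}) := by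
        rw [← Set.preimage_iUnion₂, Set.biUnion_of_singleton]
    _ ≤ ∑' x : s, P (X ⁻¹' {(x : α)}) := measure_biUnion_le P s.to_countable _
    _ ≤ ∑' x : s, ν {(x : α)} := ENNReal.tsum_le_tsum fun x => h x
    _ = ν (⋃ x ∈ s, {x}) := (measure_biUnion s.to_countable
        (fun _ _ _ _ hxy => Set.disjoint_singleton.2 hxy) fun _ _ => .singleton _).symm
    _ = ν s := by rw [Set.biUnion_of_singleton]

variable [IsFiniteMeasure P]

lemma aemeasurable_of_measure_preimage_singleton_le (h : ∀ x, P (X ⁻¹' {x}) ≤ ν {x})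
    (huniv : ν Set.univ ≤ P Set.univ) : AEMeasurable X P := by
  have hnull : NullMeasurable X P := fun s hs =>
    nullMeasurableSet_of_measure_add_measure_compl_le <|
      calc P (X ⁻¹' s) + P (X ⁻¹' sᶜ) ≤ ν s + ν sᶜ :=
            add_le_add (measure_preimage_le_of_forall_singleton h s)
              (measure_preimage_le_of_forall_singleton h sᶜ)
        _ = ν Set.univ := measure_add_measure_compl hs
        _ ≤ P Set.univ := huniv
  exact hnull.aemeasurable

lemma hasLaw_of_measure_preimage_singleton_le (h : ∀ x, P (X ⁻¹' {x}) ≤ ν {x})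
    (huniv : ν Set.univ ≤ P Set.univ) : HasLaw X ν P := by
  have hX : AEMeasurable X P := aemeasurable_of_measure_preimage_singleton_le h huniv
  have hmap_le : P.map X ≤ ν := Measure.le_iff.2 fun s hs => by
    rw [Measure.map_apply_of_aemeasurable hX hs]
    exact measure_preimage_le_of_forall_singleton h s
  have hmap_univ : P.map X Set.univ = P Set.univ := by
    rw [Measure.map_apply_of_aemeasurable hX .univ, Set.preimage_univ]
  exact ⟨hX, Measure.eq_of_le_of_measure_univ_eq hmap_le <|
    le_antisymm (hmap_le _) (huniv.trans_eq hmap_univ.symm)⟩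

end DiscreteLaw

section Poisson

lemma hasSum_descFactorial_poissonMeasure (r : ℝ≥0) (k : ℕ) :
    HasSum (fun n : ℕ => Real.exp (-r) * r ^ n / n ! * (n.descFactorial k : ℝ)) (r ^ k) := by
  have hhead : ∑ n ∈ Finset.range k,
      Real.exp (-r) * (r : ℝ) ^ n / n ! * (n.descFactorial k : ℝ) = 0 :=
    Finset.sum_eq_zero fun n hn => by
      rw [Nat.descFactorial_of_lt (Finset.mem_range.1 hn), Nat.cast_zero, mul_zero]
  have hshift (n : ℕ) :
      Real.exp (-r) * (r : ℝ) ^ (n + k) / (n + k)! * ((n + k).descFactorial k : ℝ)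
        = r ^ k * (Real.exp (-r) * r ^ n / n !) := by
    have hfact : ((n + k)! : ℝ) = n ! * (n + k).descFactorial k := by
      rw [← Nat.factorial_mul_descFactorial (Nat.le_add_left k n), Nat.add_sub_cancel,
        Nat.cast_mul]
    have hne : ((n + k).descFactorial k : ℝ) ≠ 0 := by
      rw [Nat.cast_ne_zero, Ne, Nat.descFactorial_eq_zero_iff_lt]
      lia
    rw [hfact]
    field_simp
    ring
  rw [← hasSum_nat_add_iff' k, hhead, sub_zero]
  simpa only [hshift, mul_one] using (hasSum_one_poissonMeasure r).mul_left ((r : ℝ) ^ k)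

lemma integrable_descFactorial_poissonMeasure (r : ℝ≥0) (k : ℕ) :
    Integrable (fun n : ℕ => (n.descFactorial k : ℝ)) (poissonMeasure r) := by
  rw [integrable_poissonMeasure_iff]
  simpa using (hasSum_descFactorial_poissonMeasure r k).summable

lemma integral_descFactorial_poissonMeasure (r : ℝ≥0) (k : ℕ) :
    ∫ n : ℕ, (n.descFactorial k : ℝ) ∂poissonMeasure r = r ^ k := by
  rw [integral_poissonMeasure]
  exact (hasSum_descFactorial_poissonMeasure r k).tsum_eq

lemma natCast_sq_eq_descFactorial_add {S : Type*} [Ring S] (n : ℕ) :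
    (n : S) ^ 2 = n.descFactorial 2 + n.descFactorial 1 := by
  rw [Nat.cast_descFactorial_two, Nat.descFactorial_one, mul_sub_one, sub_add_cancel, sq]

lemma memLp_natCast_poissonMeasure (r : ℝ≥0) :
    MemLp (fun n : ℕ => (n : ℝ)) 2 (poissonMeasure r) := by
  rw [memLp_two_iff_integrable_sq Measurable.of_discrete.aestronglyMeasurable]
  simp only [natCast_sq_eq_descFactorial_add]
  exact (integrable_descFactorial_poissonMeasure r 2).add
    (integrable_descFactorial_poissonMeasure r 1)

lemma integral_natCast_poissonMeasure (r : ℝ≥0) :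
    ∫ n : ℕ, (n : ℝ) ∂poissonMeasure r = r := by
  simpa using integral_descFactorial_poissonMeasure r 1

lemma variance_natCast_poissonMeasure (r : ℝ≥0) :
    Var[fun n : ℕ => (n : ℝ); poissonMeasure r] = r := by
  rw [variance_eq_sub (memLp_natCast_poissonMeasure r), integral_natCast_poissonMeasure]
  simp only [Pi.pow_apply, natCast_sq_eq_descFactorial_add]
  rw [integral_add (integrable_descFactorial_poissonMeasure r 2)
    (integrable_descFactorial_poissonMeasure r 1), integral_descFactorial_poissonMeasure,
    integral_descFactorial_poissonMeasure]
  ring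

lemma hasLaw_poissonMeasure_of_measure_eq {Ω : Type*} [MeasurableSpace Ω] {P : Measure Ω}
    [IsProbabilityMeasure P] {N : Ω → ℕ} {t : ℝ} (ht : 0 ≤ t)
    (hN : ∀ k : ℕ, P {ω | N ω = k} = ENNReal.ofReal (Real.exp (-t) * t ^ k / k !)) :
    HasLaw N (poissonMeasure t.toNNReal) P := by
  refine hasLaw_of_measure_preimage_singleton_le (fun k => ((hN k).trans ?_).le) (by simp)
  rw [poissonMeasure_singleton, Real.coe_toNNReal t ht]

end Poisson

section CenteredVariables

variable {Ω : Type*} [MeasurableSpace Ω] {P : Measure Ω} {X Z : Ω → ℝ} {v w : ℝ}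

/-- `IsCenteredOfVariance X v P` says that the random variable `X` is square integrable under `P`
with mean zero and variance `v`. This is all that second-moment computations use of the driving
noise; square integrability is included because otherwise the mean and the variance could be
correct merely by the conventions for divergent integrals. -/
structure IsCenteredOfVariance (X : Ω → ℝ) (v : ℝ) (P : Measure Ω) : Prop where
  memLp : MemLp X 2 P
  integral_eq_zero : ∫ ω, X ω ∂P = 0
  variance_eq : Var[X; P] = v

namespace IsCenteredOfVariance

lemma const_mul (hX : IsCenteredOfVariance X v P) (c : ℝ) :
    IsCenteredOfVariance (fun ω => c * X ω) (c ^ 2 * v) P where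
  memLp := hX.memLp.const_mul c
  integral_eq_zero := by rw [integral_const_mul, hX.integral_eq_zero, mul_zero]
  variance_eq := by rw [variance_const_mul, hX.variance_eq]

lemma add_of_covariance_eq_zero [IsFiniteMeasure P] (hX : IsCenteredOfVariance X v P)
    (hZ : IsCenteredOfVariance Z w P) (hXZ : cov[X, Z; P] = 0) :
    IsCenteredOfVariance (fun ω => X ω + Z ω) (v + w) P where
  memLp := hX.memLp.add hZ.memLp
  integral_eq_zero := by
    rw [integral_add (hX.memLp.integrable one_le_two) (hZ.memLp.integrable one_le_two),
      hX.integral_eq_zero, hZ.integral_eq_zero, add_zero]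
  variance_eq := by
    rw [variance_fun_add hX.memLp hZ.memLp, hXZ, hX.variance_eq, hZ.variance_eq, mul_zero,
      add_zero]

lemma integral_sq_const_add [IsProbabilityMeasure P] (hX : IsCenteredOfVariance X v P) (κ : ℝ) :
    ∫ ω, (κ + X ω) ^ 2 ∂P = κ ^ 2 + v := by
  have hmean : ∫ ω, (κ + X ω) ∂P = κ := by
    rw [integral_add (integrable_const κ) (hX.memLp.integrable one_le_two), hX.integral_eq_zero]
    simp
  have hvar : Var[fun ω => κ + X ω; P] = v := by
    rw [variance_const_add hX.memLp.aestronglyMeasurable, hX.variance_eq]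
  have hsub : Var[fun ω => κ + X ω; P] = ∫ ω, (κ + X ω) ^ 2 ∂P - (∫ ω, (κ + X ω) ∂P) ^ 2 :=
    variance_eq_sub ((memLp_const κ).add hX.memLp)
  rw [hmean, hvar] at hsub
  linarith

lemma comp_hasLaw {α : Type*} [MeasurableSpace α] {μ : Measure α} {f : α → ℝ} {U : Ω → α}
    (hf : IsCenteredOfVariance f v μ) (hU : HasLaw U μ P) :
    IsCenteredOfVariance (fun ω => f (U ω)) v P where
  memLp := MemLp.comp_of_map (hU.map_eq.symm ▸ hf.memLp) hU.aemeasurable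
  integral_eq_zero :=
    (hU.integral_comp hf.memLp.aestronglyMeasurable).trans hf.integral_eq_zero
  variance_eq := by
    rw [← hf.variance_eq, ← hU.map_eq,
      variance_map (hU.map_eq ▸ hf.memLp.aemeasurable) hU.aemeasurable, Function.comp_def]

end IsCenteredOfVariance

lemma isCenteredOfVariance_id_gaussianReal (v : ℝ≥0) :
    IsCenteredOfVariance id v (gaussianReal 0 v) where
  memLp := memLp_id_gaussianReal 2
  integral_eq_zero := integral_id_gaussianReal
  variance_eq := variance_id_gaussianReal

lemma isCenteredOfVariance_sub_integral [IsProbabilityMeasure P] (hX : MemLp X 2 P) :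
    IsCenteredOfVariance (fun ω => X ω - ∫ ω', X ω' ∂P) Var[X; P] P where
  memLp := hX.sub (memLp_const _)
  integral_eq_zero := by
    rw [integral_sub (hX.integrable one_le_two) (integrable_const _)]
    simp
  variance_eq := variance_sub_const hX.aestronglyMeasurable _

lemma isCenteredOfVariance_natCast_sub_poissonMeasure (r : ℝ≥0) :
    IsCenteredOfVariance (fun n : ℕ => (n : ℝ) - r) r (poissonMeasure r) := by
  simpa only [integral_natCast_poissonMeasure, variance_natCast_poissonMeasure] using
    isCenteredOfVariance_sub_integral (memLp_natCast_poissonMeasure r)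

lemma isCenteredOfVariance_of_map_eq_gaussianReal {t : ℝ} (ht : 0 ≤ t)
    (hX : P.map X = gaussianReal 0 t.toNNReal) : IsCenteredOfVariance X t P := by
  have hlaw : HasLaw X (gaussianReal 0 t.toNNReal) P :=
    ⟨aemeasurable_of_map_neZero (by rw [hX]; infer_instance), hX⟩
  simpa [ht] using (isCenteredOfVariance_id_gaussianReal t.toNNReal).comp_hasLaw hlaw

lemma isCenteredOfVariance_natCast_sub_of_measure_eq [IsProbabilityMeasure P] {N : Ω → ℕ} {t : ℝ}
    (ht : 0 ≤ t)
    (hN : ∀ k : ℕ, P {ω | N ω = k} = ENNReal.ofReal (Real.exp (-t) * t ^ k / k !)) :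
    IsCenteredOfVariance (fun ω => (N ω : ℝ) - t) t P := by
  simpa only [Real.coe_toNNReal t ht] using
    (isCenteredOfVariance_natCast_sub_poissonMeasure t.toNNReal).comp_hasLaw
      (hasLaw_poissonMeasure_of_measure_eq ht hN)

end CenteredVariables

section MultiplicativeRecursion

variable {Ω : Type*} [MeasurableSpace Ω] {P : Measure Ω} {Y R : ℕ → Ω → ℝ}

lemma indepFun_sq {X Z : Ω → ℝ} (h : IndepFun X Z P) :
    IndepFun (fun ω => X ω ^ 2) (fun ω => Z ω ^ 2) P :=
  h.comp (measurable_id.pow_const 2) (measurable_id.pow_const 2)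

lemma integrable_sq_of_mul_recursion (hrec : ∀ n, Y (n + 1) =ᵐ[P] fun ω => Y n ω * R n ω)
    (hind : ∀ n, IndepFun (Y n) (R n) P) (hR : ∀ n, Integrable (fun ω => R n ω ^ 2) P)
    (hY : Integrable (fun ω => Y 0 ω ^ 2) P) (n : ℕ) : Integrable (fun ω => Y n ω ^ 2) P := by
  induction n with
  | zero => exact hY
  | succ n ih =>
    refine ((indepFun_sq (hind n)).integrable_mul ih (hR n)).congr ?_
    filter_upwards [hrec n] with ω hω
    rw [hω, mul_pow, Pi.mul_apply]

lemma integral_sq_succ_of_mul_recursion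
    (hrec : ∀ n, Y (n + 1) =ᵐ[P] fun ω => Y n ω * R n ω)
    (hind : ∀ n, IndepFun (Y n) (R n) P) (hR : ∀ n, Integrable (fun ω => R n ω ^ 2) P)
    (hY : Integrable (fun ω => Y 0 ω ^ 2) P) (n : ℕ) :
    ∫ ω, Y (n + 1) ω ^ 2 ∂P = (∫ ω, R n ω ^ 2 ∂P) * ∫ ω, Y n ω ^ 2 ∂P := by
  have hYn := integrable_sq_of_mul_recursion hrec hind hR hY n
  calc ∫ ω, Y (n + 1) ω ^ 2 ∂P = ∫ ω, Y n ω ^ 2 * R n ω ^ 2 ∂P :=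
        integral_congr_ae <| (hrec n).mono fun ω hω => by simp only [hω, mul_pow]
    _ = (∫ ω, Y n ω ^ 2 ∂P) * ∫ ω, R n ω ^ 2 ∂P :=
        (indepFun_sq (hind n)).integral_fun_mul_eq_mul_integral hYn.aestronglyMeasurable
          (hR n).aestronglyMeasurable
    _ = (∫ ω, R n ω ^ 2 ∂P) * ∫ ω, Y n ω ^ 2 ∂P := mul_comm _ _

lemma integral_sq_eq_prod_of_mul_recursion
    (hrec : ∀ n, Y (n + 1) =ᵐ[P] fun ω => Y n ω * R n ω)
    (hind : ∀ n, IndepFun (Y n) (R n) P) (hR : ∀ n, Integrable (fun ω => R n ω ^ 2) P)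
    (hY : Integrable (fun ω => Y 0 ω ^ 2) P) (n : ℕ) :
    ∫ ω, Y n ω ^ 2 ∂P = (∏ i ∈ Finset.range n, ∫ ω, R i ω ^ 2 ∂P) * ∫ ω, Y 0 ω ^ 2 ∂P := by
  induction n with
  | zero => rw [Finset.prod_range_zero, one_mul]
  | succ n ih =>
    rw [integral_sq_succ_of_mul_recursion hrec hind hR hY, ih, Finset.prod_range_succ]
    ring

end MultiplicativeRecursion

lemma one_add_sq_mul_sq_add_mul_lt_one_iff {A l Δt : ℝ} (hΔt : 0 < Δt) :
    1 + A ^ 2 * Δt ^ 2 + l * Δt < 1 ↔ A ^ 2 * Δt < -l :=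
  calc 1 + A ^ 2 * Δt ^ 2 + l * Δt < 1 ↔ A ^ 2 * Δt * Δt < -l * Δt := by
        constructor <;> intro h <;> linarith
    _ ↔ A ^ 2 * Δt < -l := mul_lt_mul_iff_left₀ hΔt

theorem semi_tamed_linear_mean_square_stability_general {a b c lam Δt : ℝ} (hΔt : 0 < Δt)
    {A l : ℝ} (hA : A = a + lam * c) (hl : l = 2 * a + b ^ 2 + lam * c * (2 + c))
    {Ω : Type*} [MeasurableSpace Ω] {P : Measure Ω} [IsProbabilityMeasure P]
    {Y W M : ℕ → Ω → ℝ} (hW : ∀ n, IsCenteredOfVariance (W n) Δt P)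
    (hM : ∀ n, IsCenteredOfVariance (M n) (lam * Δt) P) (hWM : ∀ n, cov[W n, M n; P] = 0)
    (hYWM : ∀ n, IndepFun (Y n) (fun ω => (W n ω, M n ω)) P)
    (hY : Integrable (fun ω => Y 0 ω ^ 2) P)
    (hrec : ∀ n, ∀ᵐ ω ∂P, Y (n + 1) ω = Y n ω + a * Y n ω * Δt + lam * c * Y n ω * Δt
      + b * Y n ω * W n ω + c * Y n ω * M n ω) :
    (∀ n, ∫ ω, Y (n + 1) ω ^ 2 ∂P = (1 + A ^ 2 * Δt ^ 2 + l * Δt) * ∫ ω, Y n ω ^ 2 ∂P) ∧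
    (∀ n, ∫ ω, Y n ω ^ 2 ∂P = (1 + A ^ 2 * Δt ^ 2 + l * Δt) ^ n * ∫ ω, Y 0 ω ^ 2 ∂P) ∧
    (1 + A ^ 2 * Δt ^ 2 + l * Δt < 1 ↔ A ^ 2 * Δt < -l) := by
  let R (n : ℕ) (ω : Ω) : ℝ := 1 + A * Δt + (b * W n ω + c * M n ω)
  have hnoise (n : ℕ) : IsCenteredOfVariance (fun ω => b * W n ω + c * M n ω)
      (b ^ 2 * Δt + c ^ 2 * (lam * Δt)) P :=
    ((hW n).const_mul b).add_of_covariance_eq_zero ((hM n).const_mul c) <| by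
      rw [covariance_const_mul_left, covariance_const_mul_right, hWM, mul_zero, mul_zero]
  have hR_sq (n : ℕ) : ∫ ω, R n ω ^ 2 ∂P = 1 + A ^ 2 * Δt ^ 2 + l * Δt := by
    rw [(hnoise n).integral_sq_const_add, hl, hA]
    ring
  have hR_int (n : ℕ) : Integrable (fun ω => R n ω ^ 2) P :=
    ((memLp_const (1 + A * Δt)).add (hnoise n).memLp).integrable_sq
  have hYR (n : ℕ) : IndepFun (Y n) (R n) P :=
    (hYWM n).comp (ψ := fun p : ℝ × ℝ => 1 + A * Δt + (b * p.1 + c * p.2)) measurable_id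
      (by fun_prop)
  have hY_succ (n : ℕ) : Y (n + 1) =ᵐ[P] fun ω => Y n ω * R n ω := by
    filter_upwards [hrec n] with ω hω
    rw [hω, show R n ω = 1 + A * Δt + (b * W n ω + c * M n ω) from rfl, hA]
    ring
  refine ⟨fun n => ?_, fun n => ?_, one_add_sq_mul_sq_add_mul_lt_one_iff hΔt⟩
  · rw [integral_sq_succ_of_mul_recursion hY_succ hYR hR_int hY, hR_sq]
  · rw [integral_sq_eq_prod_of_mul_recursion hY_succ hYR hR_int hY]
    simp only [hR_sq, Finset.prod_const, Finset.card_range]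

/-- Mean-square stability of the semi-tamed Euler scheme for the linear jump test
equation: with `A = a + λc` and `l = 2a + b² + λc(2+c) < 0`, one has
`E[Y_{n+1}²] = (1 + A²Δt² + lΔt) E[Y_n²]`, hence
`E[Y_n²] = (1 + A²Δt² + lΔt)ⁿ E[Y_0²]`; moreover `1 + A²Δt² + lΔt < 1 ↔ A²Δt < -l`,
i.e. the scheme is mean-square stable iff `A²Δt < -l`. -/
theorem semi_tamed_linear_mean_square_stability
    (a b c lam Δt : ℝ) (hlam : 0 < lam) (hΔt : 0 < Δt)
    (A l : ℝ) (hA : A = a + lam * c) (hl : l = 2 * a + b ^ 2 + lam * c * (2 + c))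
    (hlneg : l < 0)
    {Ω : Type*} [MeasurableSpace Ω] (P : Measure Ω) [IsProbabilityMeasure P]
    (Y W : ℕ → Ω → ℝ) (N : ℕ → Ω → ℕ)
    (hWlaw : ∀ n, Measure.map (W n) P = gaussianReal 0 (Real.toNNReal Δt))
    (hNlaw : ∀ n (k : ℕ), P {ω | N n ω = k}
      = ENNReal.ofReal (Real.exp (-(lam * Δt)) * (lam * Δt) ^ k / (Nat.factorial k)))
    (hWN : ∀ n, IndepFun (W n) (N n) P)
    (hYWN : ∀ n, IndepFun (Y n) (fun ω => (W n ω, N n ω)) P)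
    (hint : ∀ n, Integrable (fun ω => (Y n ω) ^ 2) P)
    (hrec : ∀ n, ∀ᵐ ω ∂P,
      Y (n + 1) ω = Y n ω + a * Y n ω * Δt + lam * c * Y n ω * Δt
        + b * Y n ω * W n ω + c * Y n ω * ((N n ω : ℝ) - lam * Δt)) :
    (∀ n, (∫ ω, (Y (n + 1) ω) ^ 2 ∂P)
        = (1 + A ^ 2 * Δt ^ 2 + l * Δt) * ∫ ω, (Y n ω) ^ 2 ∂P) ∧
    (∀ n, (∫ ω, (Y n ω) ^ 2 ∂P)
        = (1 + A ^ 2 * Δt ^ 2 + l * Δt) ^ n * ∫ ω, (Y 0 ω) ^ 2 ∂P) ∧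
    (1 + A ^ 2 * Δt ^ 2 + l * Δt < 1 ↔ A ^ 2 * Δt < -l) := by
  have hW (n : ℕ) := isCenteredOfVariance_of_map_eq_gaussianReal hΔt.le (hWlaw n)
  have hM (n : ℕ) := isCenteredOfVariance_natCast_sub_of_measure_eq (by positivity) (hNlaw n)
  have hcomp : Measurable fun k : ℕ => (k : ℝ) - lam * Δt := .of_discrete
  exact semi_tamed_linear_mean_square_stability_general hΔt hA hl hW hM
    (fun n => ((hWN n).comp measurable_id hcomp).covariance_eq_zero (hW n).memLp (hM n).memLp)
    (fun n => (hYWN n).comp measurable_id (measurable_id.prodMap hcomp)) (hint 0) hrec
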